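/- arXiv:2601.07804 — 11 statements merged into one kernel-verified Lean document; each statement's English description precedes it below -/
import Mathlib

section
/- Let F be the local Hutchinson–Barnsley operator of a local IFS on a compact metric space X. Suppose A_0 ⊆ X is compact and F-positively invariant, and that F^i(A_0) ≠ ∅ for every i ≥ 0. Then A' := ⋂_{i ≥ 0} F^i(A_0) is a nonempty compact subset of X and F(A') = A'. -/
open Set

/-- If `A₀` is a compact, `F`-positively invariant set whose iterates
`F^[i] A₀` are all nonempty, then `A' = ⋂ i, F^[i] A₀` is a nonempty compact set with
`F A' = A'`, where `F` is the local Hutchinson–Barnsley operator of a local IFS. -/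
theorem sequential_local_attractor {X : Type*} [MetricSpace X] [CompactSpace X]
    {n : ℕ} (hn : 0 < n)
    (Xs : Fin n → Set X) (hXs : ∀ j, IsClosed (Xs j))
    (f : Fin n → X → X) (hf : ∀ j, ContinuousOn (f j) (Xs j))
    (F : Set X → Set X) (hF : ∀ B, F B = ⋃ j, f j '' (B ∩ Xs j))
    (A₀ : Set X) (hA₀ : IsCompact A₀) (hinv : F A₀ ⊆ A₀)
    (hne : ∀ i : ℕ, (F^[i] A₀).Nonempty) :
    (⋂ i : ℕ, F^[i] A₀).Nonempty ∧ IsCompact (⋂ i : ℕ, F^[i] A₀) ∧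
      F (⋂ i : ℕ, F^[i] A₀) = ⋂ i : ℕ, F^[i] A₀ := by
  have hmono : Monotone F := fun B C hBC => by
    rw [hF, hF]
    exact iUnion_mono fun j => image_mono (inter_subset_inter_left _ hBC)
  have hanti : Antitone fun i : ℕ => F^[i] A₀ :=
    hmono.antitone_iterate_of_map_le hinv
  have hcomp : ∀ i : ℕ, IsCompact (F^[i] A₀) := by
    intro i
    induction i with
    | zero => exact hA₀
    | succ i ih =>
      rw [Function.iterate_succ_apply', hF]
      exact isCompact_iUnion fun j =>
        (ih.inter_right (hXs j)).image_of_continuousOn ((hf j).mono inter_subset_right)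
  refine ⟨?_, ?_, Subset.antisymm ?_ ?_⟩
  · exact IsCompact.nonempty_iInter_of_sequence_nonempty_isCompact_isClosed _
      (fun i => hanti i.le_succ) hne (hcomp 0) fun i => (hcomp i).isClosed
  · exact (isClosed_iInter fun i => (hcomp i).isClosed).isCompact
  · refine subset_iInter fun i => ?_
    calc F (⋂ i : ℕ, F^[i] A₀) ⊆ F (F^[i] A₀) := hmono (iInter_subset _ i)
      _ = F^[i + 1] A₀ := (Function.iterate_succ_apply' F i A₀).symm
      _ ⊆ F^[i] A₀ := hanti i.le_succ
  · intro x hx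
    -- The preimages of `x` under all the maps form a closed set meeting every iterate.
    have hclosed : IsClosed (⋃ j, Xs j ∩ f j ⁻¹' {x}) :=
      isClosed_iUnion_of_finite fun j =>
        (hf j).preimage_isClosed_of_isClosed (hXs j) isClosed_singleton
    obtain ⟨y, hy⟩ := IsCompact.nonempty_iInter_of_sequence_nonempty_isCompact_isClosed
      (fun i : ℕ => F^[i] A₀ ∩ ⋃ j, Xs j ∩ f j ⁻¹' {x})
      (fun i => inter_subset_inter_left _ (hanti i.le_succ))
      (fun i => by
        have hxi := mem_iInter.1 hx (i + 1)
        rw [Function.iterate_succ_apply', hF] at hxi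
        obtain ⟨j, y, ⟨hyi, hyj⟩, hyx⟩ := mem_iUnion.1 hxi
        exact ⟨y, hyi, mem_iUnion.2 ⟨j, hyj, hyx⟩⟩)
      ((hcomp 0).inter_right hclosed) fun i => (hcomp i).isClosed.inter hclosed
    rw [mem_iInter] at hy
    obtain ⟨j, hyj, hyx⟩ := mem_iUnion.1 (hy 0).2
    rw [hF]
    exact mem_iUnion.2 ⟨j, y, ⟨mem_iInter.2 fun i => (hy i).1, hyj⟩, hyx⟩
end

section
/- Let F be the local Hutchinson–Barnsley operator of a local IFS on a compact metric space X, and let A := ⋃{B ⊆ X : F(B) = B} be its local attractor; assume A ≠ ∅. If A_0 ⊆ X is closed, F-positively invariant, and A ⊆ A_0, then A = ⋂_{i ≥ 0} F^i(A_0). In particular, taking A_0 = X, one has A = ⋂_{i ≥ 0} F^i(X), and A is a compact subset of X. -/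
open Set

/-- The local Hutchinson–Barnsley operator of the maps `f j` restricted to the sets `Xs j`. -/
def localHutchinson {X ι : Type*} (f : ι → X → X) (Xs : ι → Set X) (B : Set X) : Set X :=
  ⋃ j, f j '' (B ∩ Xs j)

namespace localHutchinson

variable {X ι : Type*} {f : ι → X → X} {Xs : ι → Set X}

theorem mem_iff {B : Set X} {x : X} :
    x ∈ localHutchinson f Xs B ↔ (B ∩ ⋃ j, Xs j ∩ f j ⁻¹' {x}).Nonempty := by
  simp only [localHutchinson, mem_iUnion, mem_image, Set.Nonempty, mem_inter_iff, mem_preimage,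
    mem_singleton_iff]
  grind

theorem mono : Monotone (localHutchinson f Xs) := fun _ _ h =>
  iUnion_mono fun _ => image_mono (inter_subset_inter_left _ h)

theorem sUnion_fixed_subset_iInter {A₀ : Set X}
    (h : ⋃₀ {B | localHutchinson f Xs B = B} ⊆ A₀) :
    ⋃₀ {B | localHutchinson f Xs B = B} ⊆ ⋂ i : ℕ, (localHutchinson f Xs)^[i] A₀ := by
  refine sUnion_subset fun B hB => subset_iInter fun i => ?_
  have hBi : (localHutchinson f Xs)^[i] B = B := Function.iterate_fixed hB i
  exact hBi.symm.subset.trans (mono.iterate i ((subset_sUnion_of_mem hB).trans h))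

variable [TopologicalSpace X] [T2Space X] [CompactSpace X] [Finite ι]

theorem isClosed (hXs : ∀ j, IsClosed (Xs j)) (hf : ∀ j, ContinuousOn (f j) (Xs j))
    {B : Set X} (hB : IsClosed B) : IsClosed (localHutchinson f Xs B) :=
  isClosed_iUnion_of_finite fun j =>
    ((hB.inter (hXs j)).isCompact.image_of_continuousOn
      ((hf j).mono inter_subset_right)).isClosed

theorem isClosed_iterate (hXs : ∀ j, IsClosed (Xs j)) (hf : ∀ j, ContinuousOn (f j) (Xs j))
    {B : Set X} (hB : IsClosed B) (i : ℕ) : IsClosed ((localHutchinson f Xs)^[i] B) := by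
  induction i with
  | zero => exact hB
  | succ i ih =>
    rw [Function.iterate_succ_apply']
    exact isClosed hXs hf ih

/-- The operator commutes with intersections of decreasing sequences of closed sets. -/
theorem iInter_eq (hXs : ∀ j, IsClosed (Xs j)) (hf : ∀ j, ContinuousOn (f j) (Xs j))
    {K : ℕ → Set X} (hK : Antitone K) (hKc : ∀ i, IsClosed (K i)) :
    localHutchinson f Xs (⋂ i, K i) = ⋂ i, localHutchinson f Xs (K i) := by
  refine Subset.antisymm mono.map_iInf_le fun x hx => ?_
  have hS : IsClosed (⋃ j, Xs j ∩ f j ⁻¹' {x}) := isClosed_iUnion_of_finite fun j =>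
    (hf j).preimage_isClosed_of_isClosed (hXs j) isClosed_singleton
  rw [mem_iff, iInter_inter]
  exact IsCompact.nonempty_iInter_of_sequence_nonempty_isCompact_isClosed _
    (fun i => inter_subset_inter_left _ (hK i.le_succ))
    (fun i => mem_iff.1 (mem_iInter.1 hx i))
    ((hKc 0).inter hS).isCompact (fun i => (hKc i).inter hS)

theorem map_iInter_iterate (hXs : ∀ j, IsClosed (Xs j)) (hf : ∀ j, ContinuousOn (f j) (Xs j))
    {A₀ : Set X} (hA₀ : IsClosed A₀) (hinv : localHutchinson f Xs A₀ ⊆ A₀) :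
    localHutchinson f Xs (⋂ i : ℕ, (localHutchinson f Xs)^[i] A₀) =
      ⋂ i : ℕ, (localHutchinson f Xs)^[i] A₀ := by
  have hanti : Antitone fun i : ℕ => (localHutchinson f Xs)^[i] A₀ :=
    mono.antitone_iterate_of_map_le hinv
  rw [iInter_eq hXs hf hanti (isClosed_iterate hXs hf hA₀)]
  simp_rw [← Function.iterate_succ_apply' (localHutchinson f Xs)]
  exact hanti.iInf_nat_add 1

theorem sUnion_fixed_eq_iInter (hXs : ∀ j, IsClosed (Xs j))
    (hf : ∀ j, ContinuousOn (f j) (Xs j)) {A₀ : Set X} (hA₀ : IsClosed A₀)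
    (hinv : localHutchinson f Xs A₀ ⊆ A₀) (h : ⋃₀ {B | localHutchinson f Xs B = B} ⊆ A₀) :
    ⋃₀ {B | localHutchinson f Xs B = B} = ⋂ i : ℕ, (localHutchinson f Xs)^[i] A₀ :=
  (sUnion_fixed_subset_iInter h).antisymm
    (subset_sUnion_of_mem (map_iInter_iterate hXs hf hA₀ hinv))

end localHutchinson

/-- If the local attractor `A = ⋃ {B : F B = B}` of a local IFS is
nonempty, then for every closed `F`-positively invariant set `A₀ ⊇ A` one has
`A = ⋂ i, F^[i] A₀`; in particular `A = ⋂ i, F^[i] X` and `A` is compact. -/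
theorem attractor_eq_iInter_of_posInvariant {X : Type*} [MetricSpace X] [CompactSpace X]
    {n : ℕ} (hn : 0 < n)
    (Xs : Fin n → Set X) (hXs : ∀ j, IsClosed (Xs j))
    (f : Fin n → X → X) (hf : ∀ j, ContinuousOn (f j) (Xs j))
    (F : Set X → Set X) (hF : ∀ B, F B = ⋃ j, f j '' (B ∩ Xs j))
    (A : Set X) (hA : A = ⋃₀ {B : Set X | F B = B}) (hAne : A.Nonempty) :
    (∀ A₀ : Set X, IsClosed A₀ → F A₀ ⊆ A₀ → A ⊆ A₀ → A = ⋂ i : ℕ, F^[i] A₀) ∧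
      A = (⋂ i : ℕ, F^[i] (Set.univ : Set X)) ∧ IsCompact A := by
  obtain rfl : F = localHutchinson f Xs := funext hF
  subst hA
  have huniv := localHutchinson.sUnion_fixed_eq_iInter hXs hf isClosed_univ
    (subset_univ _) (subset_univ _)
  refine ⟨fun A₀ => localHutchinson.sUnion_fixed_eq_iInter hXs hf, huniv, ?_⟩
  rw [huniv]
  exact (isClosed_iInter (localHutchinson.isClosed_iterate hXs hf isClosed_univ)).isCompact
end

section
/- Let F be the local Hutchinson–Barnsley operator of a local IFS on a compact metric space X with local attractor A := ⋃{B ⊆ X : F(B) = B}, and assume A ≠ ∅. Then the sets F^i(X) are nonempty and compact for every i ≥ 0, and they converge to A in the Hausdorff distance: hausdorffDist(F^i(X), A) → 0 as i → ∞. -/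
open Filter

/-- The points of a finite family of closed sets that the corresponding maps send to `x` form a
closed set. -/
theorem isClosed_setOf_exists_mem_apply_eq {ι X Y : Type*} [Finite ι] [TopologicalSpace X]
    [TopologicalSpace Y] [T1Space Y] {D : ι → Set X} (hD : ∀ j, IsClosed (D j)) {f : ι → X → Y}
    (hf : ∀ j, ContinuousOn (f j) (D j)) (x : Y) :
    IsClosed {y | ∃ j, y ∈ D j ∧ f j y = x} := by
  have h : {y | ∃ j, y ∈ D j ∧ f j y = x} = ⋃ j, D j ∩ f j ⁻¹' {x} := by
    ext y
    simp
  rw [h]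
  exact isClosed_iUnion_of_finite fun j =>
    (hf j).preimage_isClosed_of_isClosed (hD j) isClosed_singleton

/-- A local Hutchinson–Barnsley operator fixes the intersection of any decreasing sequence of
closed sets `K` with `K (i + 1) = F (K i)`. -/
theorem iUnion_image_iInter_inter_eq {ι X : Type*} [Finite ι] [TopologicalSpace X] [T1Space X]
    [CompactSpace X] {D : ι → Set X} (hD : ∀ j, IsClosed (D j)) {f : ι → X → X}
    (hf : ∀ j, ContinuousOn (f j) (D j)) {K : ℕ → Set X} (hK : ∀ i, IsClosed (K i))
    (hanti : Antitone K) (hsucc : ∀ i, K (i + 1) = ⋃ j, f j '' (K i ∩ D j)) :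
    ⋃ j, f j '' ((⋂ i, K i) ∩ D j) = ⋂ i, K i := by
  apply Set.Subset.antisymm
  · refine Set.subset_iInter fun i => Set.Subset.trans ?_ (hanti i.le_succ)
    rw [Nat.succ_eq_add_one, hsucc]
    gcongr
    exact Set.iInter_subset K i
  · intro x hx
    have hS := isClosed_setOf_exists_mem_apply_eq hD hf x
    obtain ⟨y, hy⟩ := IsCompact.nonempty_iInter_of_sequence_nonempty_isCompact_isClosed
      (fun i => K i ∩ {y | ∃ j, y ∈ D j ∧ f j y = x})
      (fun i => Set.inter_subset_inter_left _ (hanti i.le_succ))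
      (fun i => by
        have hxi := Set.mem_iInter.1 hx (i + 1)
        rw [hsucc] at hxi
        obtain ⟨j, y, ⟨hyK, hyD⟩, hyx⟩ := Set.mem_iUnion.1 hxi
        exact ⟨y, hyK, j, hyD, hyx⟩)
      ((hK 0).inter hS).isCompact (fun i => (hK i).inter hS)
    rw [Set.mem_iInter] at hy
    obtain ⟨j, hyD, hyx⟩ := (hy 0).2
    exact Set.mem_iUnion.2 ⟨j, y, ⟨Set.mem_iInter.2 fun i => (hy i).1, hyD⟩, hyx⟩

/-- A decreasing sequence of compact sets converges to its intersection
in the Hausdorff distance. -/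
theorem tendsto_hausdorffDist_iInter {X : Type*} [MetricSpace X] {K : ℕ → Set X}
    (hK : ∀ i, IsCompact (K i)) (hanti : Antitone K) :
    Tendsto (fun i => Metric.hausdorffDist (K i) (⋂ i, K i)) atTop (nhds 0) := by
  rw [Metric.tendsto_atTop]
  intro ε hε
  obtain ⟨N, hN⟩ := exists_subset_nhds_of_isCompact hanti.directed_ge hK
    (U := Metric.thickening (ε / 2) (⋂ i, K i))
    (fun x hx => Metric.isOpen_thickening.mem_nhds
      (Metric.self_subset_thickening (half_pos hε) _ hx))
  refine ⟨N, fun i hi => ?_⟩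
  rw [Real.dist_0_eq_abs, abs_of_nonneg Metric.hausdorffDist_nonneg]
  refine lt_of_le_of_lt (Metric.hausdorffDist_le_of_mem_dist (half_pos hε).le ?_ ?_)
    (half_lt_self hε)
  · intro x hx
    obtain ⟨z, hz, hxz⟩ := Metric.mem_thickening_iff.1 (hN (hanti hi hx))
    exact ⟨z, hz, hxz.le⟩
  · intro x hx
    exact ⟨x, Set.mem_iInter.1 hx i, by simpa using (half_pos hε).le⟩

/-- If the local attractor `A = ⋃ {B : F B = B}` of a local IFS on a
compact metric space is nonempty, then the iterates `F^[i] X` are nonempty compact sets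
converging to `A` in the Hausdorff distance. -/
theorem iterates_tendsto_attractor {X : Type*} [MetricSpace X] [CompactSpace X]
    {n : ℕ} (hn : 0 < n)
    (Xs : Fin n → Set X) (hXs : ∀ j, IsClosed (Xs j))
    (f : Fin n → X → X) (hf : ∀ j, ContinuousOn (f j) (Xs j))
    (F : Set X → Set X) (hF : ∀ B, F B = ⋃ j, f j '' (B ∩ Xs j))
    (A : Set X) (hA : A = ⋃₀ {B : Set X | F B = B}) (hAne : A.Nonempty) :
    (∀ i : ℕ, (F^[i] (Set.univ : Set X)).Nonempty ∧ IsCompact (F^[i] (Set.univ : Set X))) ∧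
      Tendsto (fun i : ℕ => Metric.hausdorffDist (F^[i] (Set.univ : Set X)) A)
        atTop (nhds 0) := by
  have hmono : Monotone F := fun B C hBC => by
    simp only [hF]
    gcongr
  have hcpt : ∀ i, IsCompact (F^[i] (Set.univ : Set X)) := fun i => by
    induction i with
    | zero => exact isCompact_univ
    | succ i ih =>
      rw [Function.iterate_succ_apply', hF]
      exact isCompact_iUnion fun j =>
        (ih.inter_right (hXs j)).image_of_continuousOn ((hf j).mono Set.inter_subset_right)
  have hanti : Antitone fun i => F^[i] (Set.univ : Set X) :=
    hmono.antitone_iterate_of_map_le (Set.subset_univ _)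
  have hAeq : A = ⋂ i, F^[i] (Set.univ : Set X) := by
    rw [hA]
    apply Set.Subset.antisymm
    · refine Set.sUnion_subset fun B hB => Set.subset_iInter fun i => ?_
      have hi := hmono.iterate i (Set.subset_univ B)
      rwa [Function.iterate_fixed hB] at hi
    · refine Set.subset_sUnion_of_mem ?_
      rw [Set.mem_ofPred_eq, hF]
      exact iUnion_image_iInter_inter_eq hXs hf (fun i => (hcpt i).isClosed) hanti
        fun i => by rw [Function.iterate_succ_apply', hF]
  rw [hAeq] at hAne ⊢
  exact ⟨fun i => ⟨hAne.mono (Set.iInter_subset _ i), hcpt i⟩,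
    tendsto_hausdorffDist_iInter hcpt hanti⟩
end

section
/- Let F be the local Hutchinson–Barnsley operator of a local IFS on a compact metric space X with local attractor A := ⋃{B ⊆ X : F(B) = B}, and assume A ≠ ∅. If A_0 ⊆ X is compact, F-positively invariant (F(A_0) ⊆ A_0), and A ⊆ A_0, then hausdorffDist(F^i(A_0), A) → 0 as i → ∞; that is, every compact F-positively invariant superset of A lies in the topological basin of attraction of A. -/
open Filter

/-- If `K` is a decreasing sequence of compact sets, every point lying in the image of each `K i`
under a finite union of partial maps lies in the image of the intersection. -/
theorem iInter_iUnion_image_subset_of_antitone {X Y ι : Type*} [TopologicalSpace X] [T2Space X]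
    [TopologicalSpace Y] [T1Space Y] [Finite ι] {Xs : ι → Set X} (hXs : ∀ j, IsClosed (Xs j))
    {f : ι → X → Y} (hf : ∀ j, ContinuousOn (f j) (Xs j))
    {K : ℕ → Set X} (hK : Antitone K) (hKc : ∀ i, IsCompact (K i)) :
    ⋂ i, ⋃ j, f j '' (K i ∩ Xs j) ⊆ ⋃ j, f j '' ((⋂ i, K i) ∩ Xs j) := by
  intro x hx
  have hfib : IsClosed (⋃ j, Xs j ∩ f j ⁻¹' {x}) :=
    isClosed_iUnion_of_finite fun j => (hf j).preimage_isClosed_of_isClosed (hXs j)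
      isClosed_singleton
  obtain ⟨y, hy⟩ := IsCompact.nonempty_iInter_of_sequence_nonempty_isCompact_isClosed
    (fun i => K i ∩ ⋃ j, Xs j ∩ f j ⁻¹' {x})
    (fun i => Set.inter_subset_inter_left _ (hK i.le_succ))
    (fun i => by
      obtain ⟨j, y, ⟨hyK, hyX⟩, hyx⟩ := Set.mem_iUnion.1 (Set.mem_iInter.1 hx i)
      exact ⟨y, hyK, Set.mem_iUnion.2 ⟨j, hyX, hyx⟩⟩)
    ((hKc 0).inter_right hfib) (fun i => (hKc i).isClosed.inter hfib)
  rw [Set.mem_iInter] at hy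
  obtain ⟨j, hyX, hyx⟩ := Set.mem_iUnion.1 (hy 0).2
  exact Set.mem_iUnion.2 ⟨j, y, ⟨Set.mem_iInter.2 fun i => (hy i).1, hyX⟩, hyx⟩

/-- A decreasing sequence of compact sets converges to its intersection in the Hausdorff
distance. -/
theorem tendsto_hausdorffDist_iInter_of_antitone {X : Type*} [MetricSpace X]
    {K : ℕ → Set X} (hK : Antitone K) (hKc : ∀ i, IsCompact (K i)) :
    Tendsto (fun i => Metric.hausdorffDist (K i) (⋂ i, K i)) atTop (nhds 0) := by
  rw [Metric.tendsto_atTop]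
  intro ε hε
  obtain ⟨N, hN⟩ := exists_subset_nhds_of_isCompact hK.directed_ge hKc
    (U := Metric.thickening (ε / 2) (⋂ i, K i))
    (fun x hx => Metric.isOpen_thickening.mem_nhds
      (Metric.self_subset_thickening (half_pos hε) _ hx))
  refine ⟨N, fun i hi => ?_⟩
  rw [Real.dist_0_eq_abs, abs_of_nonneg Metric.hausdorffDist_nonneg]
  refine (Metric.hausdorffDist_le_of_mem_dist (half_pos hε).le (fun x hx => ?_)
    (fun x hx => ⟨x, Set.mem_iInter.1 hx i, ?_⟩)).trans_lt (half_lt_self hε)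
  · obtain ⟨z, hz, hxz⟩ := Metric.mem_thickening_iff.1 (hN (hK hi hx))
    exact ⟨z, hz, hxz.le⟩
  · simpa using (half_pos hε).le

/-- If the local attractor `A` of a local IFS is nonempty and
`A₀` is a compact `F`-positively invariant set containing `A`, then the iterates
`F^[i] A₀` converge to `A` in the Hausdorff distance; i.e. every compact
`F`-positively invariant superset of `A` lies in the topological basin of `A`. -/
theorem posInvariant_superset_in_basin {X : Type*} [MetricSpace X] [CompactSpace X]
    {n : ℕ} (hn : 0 < n)
    (Xs : Fin n → Set X) (hXs : ∀ j, IsClosed (Xs j))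
    (f : Fin n → X → X) (hf : ∀ j, ContinuousOn (f j) (Xs j))
    (F : Set X → Set X) (hF : ∀ B, F B = ⋃ j, f j '' (B ∩ Xs j))
    (A : Set X) (hA : A = ⋃₀ {B : Set X | F B = B}) (hAne : A.Nonempty)
    (A₀ : Set X) (hA₀ : IsCompact A₀) (hinv : F A₀ ⊆ A₀) (hsub : A ⊆ A₀) :
    Tendsto (fun i : ℕ => Metric.hausdorffDist (F^[i] A₀) A) atTop (nhds 0) := by
  have hmono : Monotone F := fun B C hBC => by
    rw [hF, hF]
    exact Set.iUnion_mono fun j => Set.image_mono (Set.inter_subset_inter_left _ hBC)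
  have hanti : Antitone fun i => F^[i] A₀ := hmono.antitone_iterate_of_map_le hinv
  have hcomp : ∀ i, IsCompact (F^[i] A₀) := by
    intro i
    induction i with
    | zero => exact hA₀
    | succ i ih =>
      rw [Function.iterate_succ_apply', hF]
      exact isCompact_iUnion fun j => (ih.inter_right (hXs j)).image_of_continuousOn
        ((hf j).mono Set.inter_subset_right)
  have hlim : A = ⋂ i, F^[i] A₀ := by
    rw [hA] at hsub ⊢
    apply Set.Subset.antisymm
    · refine Set.sUnion_subset fun B hB => Set.subset_iInter fun i => ?_
      have hBi : F^[i] B = B := Function.iterate_fixed hB i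
      rw [← hBi]
      exact hmono.iterate i ((Set.subset_sUnion_of_mem hB).trans hsub)
    · refine Set.subset_sUnion_of_mem (Set.Subset.antisymm ?_ ?_)
      · refine Set.subset_iInter fun i => (hmono (Set.iInter_subset _ i)).trans ?_
        rw [← Function.iterate_succ_apply' F]
        exact hanti i.le_succ
      · rw [hF]
        refine Set.Subset.trans (Set.subset_iInter fun i => ?_)
          (iInter_iUnion_image_subset_of_antitone hXs hf hanti hcomp)
        rw [← hF, ← Function.iterate_succ_apply' F]
        exact Set.iInter_subset _ (i + 1)
  rw [hlim]
  exact tendsto_hausdorffDist_iInter_of_antitone hanti hcomp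
end

section
/- Let a local IFS on a compact metric space X have local attractor A := ⋃{B ⊆ X : F(B) = B}, and assume A ≠ ∅. Then the code space Σ := {b : ℕ → Fin n | V_b(k) ≠ ∅ for all k ≥ 1} is a nonempty closed (hence compact) subset of the product space ℕ → Fin n, where Fin n carries the discrete topology and ℕ → Fin n the product topology. -/
/-- The cylinder sets of a local IFS: `cylinder f Xs k b` is the set
`V_b(k+1) = f_{b 0}(⋯ f_{b k}(X_{b k}) ⋯ ∩ X_{b 0})` of the left-infinite word
encoded by `b : ℕ → Fin n` (so `b (k-1)` is the symbol `b_{-k}`). -/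
def cylinder {X : Type*} {n : ℕ} (f : Fin n → X → X) (Xs : Fin n → Set X) :
    ℕ → (ℕ → Fin n) → Set X
  | 0, b => f (b 0) '' Xs (b 0)
  | k + 1, b => f (b 0) '' (cylinder f Xs k (fun j => b (j + 1)) ∩ Xs (b 0))

/-- The code space of a local IFS: the set of left-infinite words all of whose
cylinder sets are nonempty. -/
def codeSpace {X : Type*} {n : ℕ} (f : Fin n → X → X) (Xs : Fin n → Set X) :
    Set (ℕ → Fin n) :=
  {b | ∀ k : ℕ, (cylinder f Xs k b).Nonempty}

/-- Each cylinder set depends only on finitely many letters of the word. -/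
theorem isLocallyConstant_cylinder {X : Type*} {n : ℕ} (f : Fin n → X → X) (Xs : Fin n → Set X)
    (k : ℕ) : IsLocallyConstant (cylinder f Xs k) := by
  have head : IsLocallyConstant fun b : ℕ → Fin n => b 0 :=
    IsLocallyConstant.iff_continuous _ |>.2 (continuous_apply 0)
  induction k with
  | zero => exact head.comp fun j => f j '' Xs j
  | succ k ih =>
    have shift : Continuous fun (b : ℕ → Fin n) (j : ℕ) => b (j + 1) := by fun_prop
    exact (head.prodMk (ih.comp_continuous shift)).comp fun p => f p.1 '' (p.2 ∩ Xs p.1)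

theorem isClosed_codeSpace {X : Type*} {n : ℕ} (f : Fin n → X → X) (Xs : Fin n → Set X) :
    IsClosed (codeSpace f Xs) := by
  rw [codeSpace, Set.ofPred_forall]
  refine isClosed_iInter fun k => ?_
  have h := isLocallyConstant_cylinder f Xs k {s | s.Nonempty}ᶜ
  exact ⟨h⟩

/-- The end point of a backward orbit lies in all cylinder sets of the word that it follows. -/
theorem mem_cylinder_of_backward_orbit {X : Type*} {n : ℕ} {f : Fin n → X → X}
    {Xs : Fin n → Set X} (k : ℕ) {b : ℕ → Fin n} {x : ℕ → X}
    (hmem : ∀ i, x (i + 1) ∈ Xs (b i)) (hmap : ∀ i, f (b i) (x (i + 1)) = x i) :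
    x 0 ∈ cylinder f Xs k b := by
  induction k generalizing b x with
  | zero => exact ⟨x 1, hmem 0, hmap 0⟩
  | succ k ih =>
    exact ⟨x 1, ⟨ih (x := fun i => x (i + 1)) (fun i => hmem (i + 1)) fun i => hmap (i + 1),
      hmem 0⟩, hmap 0⟩

/-- A nonempty set contained in its image under the local Hutchinson–Barnsley operator
yields a word in the code space. -/
theorem codeSpace_nonempty_of_subset_iUnion_image {X : Type*} {n : ℕ} {f : Fin n → X → X}
    {Xs : Fin n → Set X} {B : Set X} (hB : B ⊆ ⋃ j, f j '' (B ∩ Xs j)) (hne : B.Nonempty) :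
    (codeSpace f Xs).Nonempty := by
  have preimage : ∀ y : B, ∃ (j : Fin n) (z : B), (z : X) ∈ Xs j ∧ f j z = y := by
    intro y
    obtain ⟨j, z, ⟨hzB, hzX⟩, hz⟩ := Set.mem_iUnion.1 (hB y.2)
    exact ⟨j, ⟨z, hzB⟩, hzX, hz⟩
  choose letter pre hmem hmap using preimage
  obtain ⟨x₀, hx₀⟩ := hne
  let x : ℕ → B := fun i => pre^[i] ⟨x₀, hx₀⟩
  have hx : ∀ i, x (i + 1) = pre (x i) := fun i => Function.iterate_succ_apply' pre i _
  refine ⟨fun i => letter (x i), fun k =>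
    ⟨x 0, mem_cylinder_of_backward_orbit (x := fun i => (x i : X)) k ?_ ?_⟩⟩
  · intro i
    simpa only [hx] using hmem (x i)
  · intro i
    simpa only [hx] using hmap (x i)

/-- If the local attractor `A = ⋃ {B : F B = B}` of a local IFS is
nonempty, then the code space `Σ = {b | V_b(k) ≠ ∅ for all k ≥ 1}` is a nonempty closed
(hence compact) subset of the product space `ℕ → Fin n`. -/
theorem codeSpace_nonempty_isClosed_isCompact {X : Type*} [MetricSpace X] [CompactSpace X]
    {n : ℕ} (hn : 0 < n)
    (Xs : Fin n → Set X) (hXs : ∀ j, IsClosed (Xs j))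
    (f : Fin n → X → X) (hf : ∀ j, ContinuousOn (f j) (Xs j))
    (F : Set X → Set X) (hF : ∀ B, F B = ⋃ j, f j '' (B ∩ Xs j))
    (A : Set X) (hA : A = ⋃₀ {B : Set X | F B = B}) (hAne : A.Nonempty) :
    (codeSpace f Xs).Nonempty ∧ IsClosed (codeSpace f Xs) ∧ IsCompact (codeSpace f Xs) := by
  obtain ⟨x, hx⟩ := hAne
  rw [hA] at hx
  obtain ⟨B, hB, hxB⟩ := hx
  have hBF : B ⊆ ⋃ j, f j '' (B ∩ Xs j) := by
    rw [← hF, show F B = B from hB]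
  exact ⟨codeSpace_nonempty_of_subset_iUnion_image hBF ⟨x, hxB⟩,
    isClosed_codeSpace f Xs, (isClosed_codeSpace f Xs).isCompact⟩
end

section
/- Let a local IFS on a compact metric space X be contractive, i.e., each f_j satisfies d(f_j(x), f_j(y)) ≤ λ_j d(x,y) for all x,y ∈ X_j with λ_j < 1. Then for every b in the code space Σ, the nested intersection ⋂_{k ≥ 1} V_b(k) is a singleton; i.e., there is exactly one point x ∈ X with x ∈ V_b(k) for all k ≥ 1. -/
theorem cylinder_succ_subset {X : Type*} {n : ℕ} (f : Fin n → X → X) (Xs : Fin n → Set X)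
    (k : ℕ) (b : ℕ → Fin n) : cylinder f Xs (k + 1) b ⊆ cylinder f Xs k b := by
  induction k generalizing b with
  | zero => exact Set.image_mono Set.inter_subset_right
  | succ k ih => exact Set.image_mono (Set.inter_subset_inter_left _ (ih _))

theorem isCompact_cylinder {X : Type*} [TopologicalSpace X] [CompactSpace X] {n : ℕ}
    {f : Fin n → X → X} {Xs : Fin n → Set X} (hXs : ∀ j, IsClosed (Xs j))
    (hf : ∀ j, ContinuousOn (f j) (Xs j)) (k : ℕ) (b : ℕ → Fin n) :
    IsCompact (cylinder f Xs k b) := by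
  induction k generalizing b with
  | zero => exact (hXs _).isCompact.image_of_continuousOn (hf _)
  | succ k ih =>
    exact ((ih _).inter_right (hXs _)).image_of_continuousOn ((hf _).mono Set.inter_subset_right)

theorem dist_le_of_mem_cylinder {X : Type*} [PseudoMetricSpace X] {n : ℕ}
    {f : Fin n → X → X} {Xs : Fin n → Set X} {c D : ℝ} (hc : 0 ≤ c)
    (hD : ∀ x y : X, dist x y ≤ D)
    (hcontr : ∀ j, ∀ x ∈ Xs j, ∀ y ∈ Xs j, dist (f j x) (f j y) ≤ c * dist x y)
    (k : ℕ) (b : ℕ → Fin n) {x y : X} (hx : x ∈ cylinder f Xs k b)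
    (hy : y ∈ cylinder f Xs k b) : dist x y ≤ c ^ (k + 1) * D := by
  induction k generalizing b x y with
  | zero =>
    obtain ⟨u, hu, rfl⟩ := hx
    obtain ⟨v, hv, rfl⟩ := hy
    rw [zero_add, pow_one]
    exact (hcontr _ u hu v hv).trans (mul_le_mul_of_nonneg_left (hD u v) hc)
  | succ k ih =>
    obtain ⟨u, ⟨hu, hu'⟩, rfl⟩ := hx
    obtain ⟨v, ⟨hv, hv'⟩, rfl⟩ := hy
    rw [pow_succ', mul_assoc]
    exact (hcontr _ u hu' v hv').trans (mul_le_mul_of_nonneg_left (ih _ hu hv) hc)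

/-- For a contractive local IFS on a compact metric space, for every
word `b` in the code space the nested intersection `⋂_{k ≥ 1} V_b(k)` is a singleton:
there is exactly one point lying in all cylinder sets of `b`. -/
theorem cylinder_iInter_singleton {X : Type*} [MetricSpace X] [CompactSpace X]
    {n : ℕ} (hn : 0 < n)
    (Xs : Fin n → Set X) (hXs : ∀ j, IsClosed (Xs j))
    (f : Fin n → X → X)
    (lam : Fin n → ℝ) (hlam0 : ∀ j, 0 ≤ lam j) (hlam1 : ∀ j, lam j < 1)
    (hcontr : ∀ j, ∀ x ∈ Xs j, ∀ y ∈ Xs j, dist (f j x) (f j y) ≤ lam j * dist x y)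
    (b : ℕ → Fin n) (hb : b ∈ codeSpace f Xs) :
    ∃! x : X, ∀ k : ℕ, x ∈ cylinder f Xs k b := by
  have hf : ∀ j, ContinuousOn (f j) (Xs j) := fun j =>
    (LipschitzOnWith.of_dist_le_mul (K := ⟨lam j, hlam0 j⟩) (hcontr j)).continuousOn
  have hcomp := isCompact_cylinder hXs hf
  obtain ⟨x, hx⟩ := IsCompact.nonempty_iInter_of_sequence_nonempty_isCompact_isClosed
    (fun k => cylinder f Xs k b) (fun k => cylinder_succ_subset f Xs k b) hb (hcomp 0 b)
    (fun k => (hcomp k b).isClosed)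
  rw [Set.mem_iInter] at hx
  refine ⟨x, hx, fun y hy => ?_⟩
  have : Nonempty (Fin n) := ⟨⟨0, hn⟩⟩
  obtain ⟨i, hi⟩ := Finite.exists_max lam
  have hdist (k : ℕ) : dist y x ≤ lam i ^ (k + 1) * Metric.diam (Set.univ : Set X) :=
    dist_le_of_mem_cylinder (hlam0 i)
      (fun u v => Metric.dist_le_diam_of_mem isCompact_univ.isBounded trivial trivial)
      (fun j u hu v hv => (hcontr j u hu v hv).trans
        (mul_le_mul_of_nonneg_right (hi j) dist_nonneg)) k b (hy k) (hx k)
  have hlim := (((tendsto_pow_atTop_nhds_zero_of_lt_one (hlam0 i) (hlam1 i)).comp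
    (Filter.tendsto_add_atTop_nat 1)).mul_const (Metric.diam (Set.univ : Set X)))
  rw [zero_mul] at hlim
  exact dist_le_zero.mp (ge_of_tendsto' hlim hdist)
end

section
/- Let a local IFS on a compact metric space X have local Hutchinson–Barnsley operator F and local attractor A := ⋃{B ⊆ X : F(B) = B}. Then the following are equivalent: (1) A ≠ ∅; (2) there exists a point x ∈ X with an infinite orbit. Moreover, if A ≠ ∅ then there exists a point x ∈ A with an infinite orbit; in particular A^∞ ≠ ∅. -/
/-- The orbit of a point `x` of a local IFS directed by the itinerary `a`:
`orbitSeq f x a 0 = x` and `orbitSeq f x a (i+1) = f (a i) (orbitSeq f x a i)`. -/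
def orbitSeq {X : Type*} {n : ℕ} (f : Fin n → X → X) (x : X) (a : ℕ → Fin n) : ℕ → X
  | 0 => x
  | i + 1 => f (a i) (orbitSeq f x a i)

/-- A closed relation on a compact space with chains over every interval `[-m, m]` has a
bi-infinite chain. -/
theorem exists_biinfinite_chain {X : Type*} [TopologicalSpace X] [CompactSpace X]
    {R : X → X → Prop} (hR : IsClosed {p : X × X | R p.1 p.2})
    (h : ∀ m : ℕ, ∃ u : ℤ → X, ∀ i : ℤ, -m ≤ i → i < m → R (u i) (u (i + 1))) :
    ∃ u : ℤ → X, ∀ i, R (u i) (u (i + 1)) := by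
  let C : ℕ → Set (ℤ → X) := fun m => {u | ∀ i : ℤ, -m ≤ i → i < m → R (u i) (u (i + 1))}
  have hC : ∀ m, IsClosed (C m) := by
    intro m
    simp only [C, Set.ofPred_forall]
    refine isClosed_iInter fun i => isClosed_iInter fun _ => isClosed_iInter fun _ => ?_
    have hcont : Continuous fun u : ℤ → X => (u i, u (i + 1)) := by fun_prop
    exact hR.preimage hcont
  obtain ⟨u, hu⟩ := IsCompact.nonempty_iInter_of_sequence_nonempty_isCompact_isClosed C
    (fun m u hu i h₁ h₂ => hu i (by push_cast; omega) (by push_cast; omega))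
    h (hC 0).isCompact hC
  refine ⟨u, fun i => Set.mem_iInter.1 hu (i.natAbs + 1) i ?_ ?_⟩ <;> omega

/-- The one-step relation of a map continuous on a closed set is closed. -/
theorem isClosed_graphOn {X Y : Type*} [TopologicalSpace X] [TopologicalSpace Y] [T2Space Y]
    {s : Set X} (hs : IsClosed s) {g : X → Y} (hg : ContinuousOn g s) :
    IsClosed {p : X × Y | p.1 ∈ s ∧ g p.1 = p.2} := by
  have hcont : ContinuousOn (fun p : X × Y => (g p.1, p.2)) (Prod.fst ⁻¹' s) :=
    (hg.comp continuous_fst.continuousOn fun _ hp => hp).prodMk continuous_snd.continuousOn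
  exact hcont.preimage_isClosed_of_isClosed (hs.preimage continuous_fst) isClosed_diagonal

/-- A set contained in its image under a monotone operator lies in the union of the fixed sets. -/
theorem subset_sUnion_fixed {X : Type*} {F : Set X → Set X} (hF : Monotone F) {B : Set X}
    (hB : B ⊆ F B) : B ⊆ ⋃₀ {B : Set X | F B = B} := by
  let G : Set X →o Set X := ⟨F, hF⟩
  exact (G.le_gfp hB).trans (Set.subset_sUnion_of_mem G.map_gfp)

/-- For a local IFS on a compact metric space with local attractor
`A = ⋃ {B : F B = B}`, the following are equivalent: (1) `A ≠ ∅`; (2) there is a point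
`x ∈ X` with an infinite orbit, i.e. an admissible itinerary `a` with
`x_i ∈ X_{a i}` for all `i`.  Moreover, if `A ≠ ∅` then some point of `A` has an
infinite orbit; in particular `A^∞ ≠ ∅`. -/
theorem attractor_nonempty_iff_infinite_orbit {X : Type*} [MetricSpace X] [CompactSpace X]
    {n : ℕ} (hn : 0 < n)
    (Xs : Fin n → Set X) (hXs : ∀ j, IsClosed (Xs j))
    (f : Fin n → X → X) (hf : ∀ j, ContinuousOn (f j) (Xs j))
    (F : Set X → Set X) (hF : ∀ B, F B = ⋃ j, f j '' (B ∩ Xs j))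
    (A : Set X) (hA : A = ⋃₀ {B : Set X | F B = B}) :
    (A.Nonempty ↔ ∃ (x : X) (a : ℕ → Fin n), ∀ i : ℕ, orbitSeq f x a i ∈ Xs (a i)) ∧
      (A.Nonempty →
        ∃ x ∈ A, ∃ a : ℕ → Fin n, ∀ i : ℕ, orbitSeq f x a i ∈ Xs (a i)) := by
  let R : X → X → Prop := fun x y => ∃ j, x ∈ Xs j ∧ f j x = y
  have hR : IsClosed {p : X × X | R p.1 p.2} := by
    simp only [R, Set.ofPred_exists]
    exact isClosed_iUnion_of_finite fun j => isClosed_graphOn (hXs j) (hf j)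
  have mem_F : ∀ B y, y ∈ F B ↔ ∃ x ∈ B, R x y := by
    intro B y
    simp only [hF, Set.mem_iUnion, Set.mem_image, Set.mem_inter_iff, R]
    grind
  have hmono : Monotone F := by
    intro B C hBC y hy
    obtain ⟨x, hx, hxy⟩ := (mem_F B y).1 hy
    exact (mem_F C y).2 ⟨x, hBC hx, hxy⟩
  have exists_of_chain : (∃ u : ℤ → X, ∀ i, R (u i) (u (i + 1))) →
      ∃ x ∈ A, ∃ a : ℕ → Fin n, ∀ i : ℕ, orbitSeq f x a i ∈ Xs (a i) := by
    rintro ⟨u, hu⟩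
    have hsub : Set.range u ⊆ A := by
      rw [hA]
      refine subset_sUnion_fixed hmono ?_
      rintro _ ⟨i, rfl⟩
      exact (mem_F _ _).2 ⟨u (i - 1), ⟨_, rfl⟩, by simpa using hu (i - 1)⟩
    choose a ha using hu
    have horb : ∀ i : ℕ, orbitSeq f (u 0) (fun k => a k) i = u i := by
      intro i
      induction i with
      | zero => rfl
      | succ k ih => simpa [orbitSeq, ih] using (ha k).2
    exact ⟨u 0, hsub ⟨0, rfl⟩, fun k => a k, fun i => by rw [horb]; exact (ha i).1⟩
  have exists_of_nonempty : A.Nonempty →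
      ∃ x ∈ A, ∃ a : ℕ → Fin n, ∀ i : ℕ, orbitSeq f x a i ∈ Xs (a i) := by
    rintro ⟨x, hx⟩
    rw [hA] at hx
    obtain ⟨B, hB, hxB⟩ := hx
    have hpred : ∀ y : B, ∃ z : B, R z y := by
      rintro ⟨y, hy⟩
      rw [← (show F B = B from hB), mem_F] at hy
      obtain ⟨z, hz, hzy⟩ := hy
      exact ⟨⟨z, hz⟩, hzy⟩
    choose p hp using hpred
    refine exists_of_chain (exists_biinfinite_chain hR fun m =>
      ⟨fun i => (p^[(m - i).toNat] ⟨x, hxB⟩ : B), fun i _ hi => ?_⟩)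
    have hstep : ((m : ℤ) - i).toNat = (m - (i + 1)).toNat + 1 := by omega
    simp only [hstep, Function.iterate_succ_apply']
    exact hp _
  refine ⟨⟨fun h => ?_, ?_⟩, exists_of_nonempty⟩
  · obtain ⟨x, -, hx⟩ := exists_of_nonempty h
    exact ⟨x, hx⟩
  · rintro ⟨x, a, ha⟩
    obtain ⟨y, hy, -⟩ := exists_of_chain (exists_biinfinite_chain hR fun m =>
      ⟨fun i => orbitSeq f x a (i + m).toNat, fun i hi _ => by
        have hstep : (i + 1 + m).toNat = (i + m).toNat + 1 := by omega
        simp only [hstep]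
        exact ⟨_, ha _, rfl⟩⟩)
    exact ⟨y, hy⟩
end

section
/- Let a local IFS on a compact metric space X have local attractor A := ⋃{B ⊆ X : F(B) = B}. Then: (1) a point x ∈ X has an infinite orbit if and only if for every ℓ ≥ 1 there exists a finite admissible itinerary of length ℓ from x; (2) if A ≠ ∅, then A^∞ := {x ∈ A : x has an infinite orbit} is a compact subset of X. -/
theorem orbitSeq_succ_eq_tail {X : Type*} {n : ℕ} (f : Fin n → X → X) (x : X) (a : ℕ → Fin n)
    (i : ℕ) : orbitSeq f x a (i + 1) = orbitSeq f (f (a 0) x) (fun k => a (k + 1)) i := by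
  induction i with
  | zero => rfl
  | succ i ih =>
    change f (a (i + 1)) (orbitSeq f x a (i + 1)) = _
    rw [ih]
    rfl

/-- If every point of `S` has an admissible image in `S`, then every point of `S` has an
infinite orbit. -/
theorem exists_infinite_orbit_of_viable {X : Type*} {n : ℕ} {Xs : Fin n → Set X}
    {f : Fin n → X → X} {S : Set X} (hS : ∀ x ∈ S, ∃ j, x ∈ Xs j ∧ f j x ∈ S)
    {x : X} (hx : x ∈ S) : ∃ a : ℕ → Fin n, ∀ i, orbitSeq f x a i ∈ Xs (a i) := by
  have : Nonempty (Fin n) := (hS x hx).nonempty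
  choose! g hgX hgS using hS
  let y : ℕ → X := fun i => (fun z => f (g z) z)^[i] x
  have hy : ∀ i, y i ∈ S := fun i => by
    induction i with
    | zero => exact hx
    | succ i ih =>
      simp only [y, Function.iterate_succ_apply']
      exact hgS _ ih
  have horbit : ∀ i, orbitSeq f x (fun k => g (y k)) i = y i := fun i => by
    induction i with
    | zero => rfl
    | succ i ih =>
      simp only [orbitSeq, ih]
      exact (Function.iterate_succ_apply' (fun z => f (g z) z) i x).symm
  exact ⟨fun k => g (y k), fun i => horbit i ▸ hgX _ (hy i)⟩

theorem exists_image_infinite_orbit {X : Type*} {n : ℕ} {Xs : Fin n → Set X}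
    {f : Fin n → X → X} {x : X} (hx : ∃ a : ℕ → Fin n, ∀ i, orbitSeq f x a i ∈ Xs (a i)) :
    ∃ j, x ∈ Xs j ∧ ∃ a : ℕ → Fin n, ∀ i, orbitSeq f (f j x) a i ∈ Xs (a i) := by
  obtain ⟨a, ha⟩ := hx
  exact ⟨a 0, ha 0, fun k => a (k + 1), fun i => orbitSeq_succ_eq_tail f x a i ▸ ha (i + 1)⟩

theorem exists_image_finite_orbits {X : Type*} {n : ℕ} {Xs : Fin n → Set X}
    {f : Fin n → X → X} {x : X}
    (hx : ∀ ℓ : ℕ, ∃ a : ℕ → Fin n, ∀ i < ℓ, orbitSeq f x a i ∈ Xs (a i)) :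
    ∃ j, x ∈ Xs j ∧
      ∀ ℓ : ℕ, ∃ a : ℕ → Fin n, ∀ i < ℓ, orbitSeq f (f j x) a i ∈ Xs (a i) := by
  by_contra! h
  have hbound : ∀ j, ∃ ℓ : ℕ, x ∈ Xs j →
      ∀ a : ℕ → Fin n, ∃ i < ℓ, orbitSeq f (f j x) a i ∉ Xs (a i) := fun j => by
    by_cases hj : x ∈ Xs j
    · obtain ⟨ℓ, hℓ⟩ := h j hj
      exact ⟨ℓ, fun _ => hℓ⟩
    · exact ⟨0, fun h => absurd h hj⟩
  choose L hL using hbound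
  obtain ⟨a, ha⟩ := hx (Finset.univ.sup L + 1)
  obtain ⟨i, hi, hmem⟩ := hL (a 0) (ha 0 (Nat.succ_pos _)) (fun k => a (k + 1))
  have hle : L (a 0) ≤ Finset.univ.sup L := Finset.le_sup (Finset.mem_univ _)
  exact hmem (orbitSeq_succ_eq_tail f x a i ▸ ha (i + 1) (by omega))

theorem isClosed_setOf_infinite_orbit {X : Type*} [TopologicalSpace X] {n : ℕ}
    {Xs : Fin n → Set X} (hXs : ∀ j, IsClosed (Xs j)) {f : Fin n → X → X}
    (hf : ∀ j, ContinuousOn (f j) (Xs j)) :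
    IsClosed {x | ∃ a : ℕ → Fin n, ∀ i, orbitSeq f x a i ∈ Xs (a i)} := by
  set S := {x | ∃ a : ℕ → Fin n, ∀ i, orbitSeq f x a i ∈ Xs (a i)}
  have hcover : S ⊆ ⋃ j, Xs j ∩ f j ⁻¹' S := fun x hx =>
    Set.mem_iUnion.2 (exists_image_infinite_orbit hx)
  refine isClosed_of_closure_subset fun x hx =>
    exists_infinite_orbit_of_viable (S := closure S) (fun y hy => ?_) hx
  have hy' := closure_mono hcover hy
  rw [closure_iUnion_of_finite] at hy'
  obtain ⟨j, hj⟩ := Set.mem_iUnion.1 hy'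
  have hyX : y ∈ Xs j := (hXs j).closure_subset_iff.2 Set.inter_subset_left hj
  exact ⟨j, hyX, ((hf j y hyX).mono Set.inter_subset_left).mem_closure hj fun z hz => hz.2⟩

/-- The union of all fixed sets of a local Hutchinson–Barnsley operator is closed. -/
theorem isClosed_sUnion_fixed {X : Type*} [TopologicalSpace X] [T2Space X] [CompactSpace X]
    {n : ℕ} {Xs : Fin n → Set X} (hXs : ∀ j, IsClosed (Xs j)) {f : Fin n → X → X}
    (hf : ∀ j, ContinuousOn (f j) (Xs j)) {F : Set X → Set X}
    (hF : ∀ B, F B = ⋃ j, f j '' (B ∩ Xs j)) :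
    IsClosed (⋃₀ {B : Set X | F B = B}) := by
  have hmono : Monotone F := fun B C hBC => by
    rw [hF, hF]
    gcongr
  have hgfp : F (OrderHom.gfp ⟨F, hmono⟩) = OrderHom.gfp ⟨F, hmono⟩ :=
    OrderHom.map_gfp ⟨F, hmono⟩
  have hsub : ∀ C, C ⊆ F C → C ⊆ ⋃₀ {B : Set X | F B = B} := fun C hC =>
    (OrderHom.le_gfp ⟨F, hmono⟩ hC).trans (Set.subset_sUnion_of_mem hgfp)
  set A := ⋃₀ {B : Set X | F B = B}
  have hA : A ⊆ F A := Set.sUnion_subset fun B (hB : F B = B) =>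
    hB.symm.subset.trans (hmono (Set.subset_sUnion_of_mem hB))
  have hclosed : IsClosed (F (closure A)) := by
    rw [hF]
    refine isClosed_iUnion_of_finite fun j => IsCompact.isClosed ?_
    exact (isClosed_closure.inter (hXs j)).isCompact.image_of_continuousOn
      ((hf j).mono Set.inter_subset_right)
  exact isClosed_of_closure_subset
    (hsub _ (closure_minimal (hA.trans (hmono subset_closure)) hclosed))

/-- For a local IFS on a compact metric space with local attractor
`A = ⋃ {B : F B = B}`: (1) a point `x` has an infinite orbit iff for every `ℓ ≥ 1`
there is a finite admissible itinerary of length `ℓ` from `x`; (2) if `A ≠ ∅` then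
`A^∞ = {x ∈ A : x has an infinite orbit}` is compact. -/
theorem infinite_orbit_iff_and_Ainf_compact {X : Type*} [MetricSpace X] [CompactSpace X]
    {n : ℕ} (hn : 0 < n)
    (Xs : Fin n → Set X) (hXs : ∀ j, IsClosed (Xs j))
    (f : Fin n → X → X) (hf : ∀ j, ContinuousOn (f j) (Xs j))
    (F : Set X → Set X) (hF : ∀ B, F B = ⋃ j, f j '' (B ∩ Xs j))
    (A : Set X) (hA : A = ⋃₀ {B : Set X | F B = B}) :
    (∀ x : X,
      (∃ a : ℕ → Fin n, ∀ i : ℕ, orbitSeq f x a i ∈ Xs (a i)) ↔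
        ∀ ℓ : ℕ, 1 ≤ ℓ → ∃ a : ℕ → Fin n, ∀ i < ℓ, orbitSeq f x a i ∈ Xs (a i)) ∧
      (A.Nonempty →
        IsCompact {x ∈ A | ∃ a : ℕ → Fin n, ∀ i : ℕ, orbitSeq f x a i ∈ Xs (a i)}) := by
  refine ⟨fun x => ⟨fun ⟨a, ha⟩ _ _ => ⟨a, fun i _ => ha i⟩, fun h => ?_⟩, fun _ => ?_⟩
  · refine exists_infinite_orbit_of_viable
      (S := {x | ∀ ℓ : ℕ, ∃ a : ℕ → Fin n, ∀ i < ℓ, orbitSeq f x a i ∈ Xs (a i)})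
      (fun y hy => exists_image_finite_orbits hy) fun ℓ => ?_
    obtain ⟨a, ha⟩ := h (ℓ + 1) (Nat.le_add_left 1 ℓ)
    exact ⟨a, fun i hi => ha i (hi.trans (Nat.lt_succ_self ℓ))⟩
  · subst hA
    exact ((isClosed_sUnion_fixed hXs hf hF).inter
      (isClosed_setOf_infinite_orbit hXs hf)).isCompact
end

section
/- Let X be a compact metric space and f_1, …, f_n : X → X contractions (global IFS), and let A_R be an attractor of the global IFS, i.e., a nonempty compact set with ⋃_{j=1}^n f_j(A_R) = A_R. Let X_1, …, X_n be closed subsets of X and let A be the local attractor of the local IFS obtained by restricting each f_j to X_j. Then A ⊆ A_R. -/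
open Filter Topology in
/-- Let `K < 1` be a common Lipschitz constant of the maps `f j`, all of which preserve the nonempty
compact set `C`. Then every bounded set covered by its own images under the `f j` lies in `C`. -/
theorem subset_of_subset_iUnion_image_of_contracting {X ι : Type*} [MetricSpace X]
    {f : ι → X → X} {K : ℝ} (hK0 : 0 ≤ K) (hK1 : K < 1)
    (hf : ∀ j x y, dist (f j x) (f j y) ≤ K * dist x y)
    {C : Set X} (hCne : C.Nonempty) (hC : IsCompact C) (hfC : ∀ j, Set.MapsTo (f j) C C)
    {B : Set X} (hB : Bornology.IsBounded B) (hBf : B ⊆ ⋃ j, f j '' B) : B ⊆ C := by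
  have infDist_map_le (j : ι) (x : X) :
      Metric.infDist (f j x) C ≤ K * Metric.infDist x C := by
    obtain ⟨y, hy, hxy⟩ := hC.exists_infDist_eq_dist hCne x
    rw [hxy]
    exact (Metric.infDist_le_dist_of_mem (hfC j hy)).trans (hf j x y)
  obtain ⟨c, hc⟩ := hCne
  obtain ⟨D, hD⟩ := hB.subset_closedBall c
  have infDist_le_pow (k : ℕ) : ∀ x ∈ B, Metric.infDist x C ≤ K ^ k * D := by
    induction k with
    | zero =>
      intro x hx
      simpa using (Metric.infDist_le_dist_of_mem hc).trans (hD hx)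
    | succ k ih =>
      intro x hx
      obtain ⟨j, y, hy, rfl⟩ := Set.mem_iUnion.1 (hBf hx)
      calc Metric.infDist (f j y) C ≤ K * Metric.infDist y C := infDist_map_le j y
        _ ≤ K * (K ^ k * D) := mul_le_mul_of_nonneg_left (ih y hy) hK0
        _ = K ^ (k + 1) * D := by ring
  intro x hx
  have hlim : Tendsto (fun k : ℕ => K ^ k * D) atTop (𝓝 0) := by
    simpa using (tendsto_pow_atTop_nhds_zero_of_lt_one hK0 hK1).mul_const D
  have hle : Metric.infDist x C ≤ 0 := ge_of_tendsto' hlim fun k => infDist_le_pow k x hx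
  exact (hC.isClosed.mem_iff_infDist_zero ⟨c, hc⟩).2 (hle.antisymm Metric.infDist_nonneg)

/-- If `A_R` is an attractor of a global contractive IFS
`(f j)` on a compact metric space `X` (i.e. a nonempty compact set with
`⋃ j, f j '' A_R = A_R`), and `A` is the local attractor of the local IFS obtained
by restricting each `f j` to a closed set `X_j`, then `A ⊆ A_R`. -/
theorem local_attractor_subset_global {X : Type*} [MetricSpace X] [CompactSpace X]
    {n : ℕ} (hn : 0 < n)
    (f : Fin n → X → X)
    (lam : Fin n → ℝ) (hlam0 : ∀ j, 0 ≤ lam j) (hlam1 : ∀ j, lam j < 1)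
    (hcontr : ∀ j, ∀ x y : X, dist (f j x) (f j y) ≤ lam j * dist x y)
    (AR : Set X) (hARne : AR.Nonempty) (hARc : IsCompact AR)
    (hAR : ⋃ j, f j '' AR = AR)
    (Xs : Fin n → Set X) (hXs : ∀ j, IsClosed (Xs j))
    (F : Set X → Set X) (hF : ∀ B, F B = ⋃ j, f j '' (B ∩ Xs j))
    (A : Set X) (hA : A = ⋃₀ {B : Set X | F B = B}) :
    A ⊆ AR := by
  have : Nonempty (Fin n) := ⟨⟨0, hn⟩⟩
  obtain ⟨i, hi⟩ := Finite.exists_max lam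
  subst hA
  refine Set.sUnion_subset fun B hB => ?_
  refine subset_of_subset_iUnion_image_of_contracting (hlam0 i) (hlam1 i)
    (fun j x y => (hcontr j x y).trans (mul_le_mul_of_nonneg_right (hi j) dist_nonneg))
    hARne hARc (fun j x hx => ?_) Metric.isBounded_of_compactSpace ?_
  · rw [← hAR]
    exact Set.mem_iUnion.2 ⟨j, x, hx, rfl⟩
  · calc B = ⋃ j, f j '' (B ∩ Xs j) := by rw [← hF, hB]
      _ ⊆ ⋃ j, f j '' B := Set.iUnion_mono fun j => Set.image_mono Set.inter_subset_left
end

section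
/- Let a contractive local IFS on a compact metric space X have local attractor A ≠ ∅, and let λ := max_j λ_j ∈ [0,1). For a compact set K ⊆ X and b : ℕ → Fin n, define W_b^K(1) = f_{b(0)}(K ∩ X_{b(0)}) and W_b^K(k+1) = f_{b(0)}(W_{σb}^K(k) ∩ X_{b(0)}), where σb := (j ↦ b(j+1)); define the essential part ess_k(A_0) := ⋃{W_b^{A_0}(k) : b such that W_b^{A}(k) ≠ ∅}. Then for every compact set A_0 with A ⊆ A_0 and every k ≥ 1: hausdorffDist(ess_k(A_0), A) ≤ λ^k · diam(X). -/
/-- The relative cylinder sets of a local IFS: `relCylinder f Xs K k b` is the set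
`W_b^K(k+1)`, where `W_b^K(1) = f_{b 0}(K ∩ X_{b 0})` and
`W_b^K(k+1) = f_{b 0}(W_{σb}^K(k) ∩ X_{b 0})`. -/
def relCylinder {X : Type*} {n : ℕ} (f : Fin n → X → X) (Xs : Fin n → Set X)
    (K : Set X) : ℕ → (ℕ → Fin n) → Set X
  | 0, b => f (b 0) '' (K ∩ Xs (b 0))
  | k + 1, b => f (b 0) '' (relCylinder f Xs K k (fun j => b (j + 1)) ∩ Xs (b 0))

/-- The essential part of `F^[k+1] A₀`: the union of those cylinders of `A₀` of
generation `k+1` whose corresponding cylinder of the attractor `A` is nonempty. -/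
def essentialPart {X : Type*} {n : ℕ} (f : Fin n → X → X) (Xs : Fin n → Set X)
    (A A₀ : Set X) (k : ℕ) : Set X :=
  ⋃ b ∈ {b : ℕ → Fin n | (relCylinder f Xs A k b).Nonempty}, relCylinder f Xs A₀ k b

section RelCylinder

variable {X : Type*} {n : ℕ} {f : Fin n → X → X} {Xs : Fin n → Set X}

theorem relCylinder_mono {K K' : Set X} (h : K ⊆ K') (k : ℕ) (b : ℕ → Fin n) :
    relCylinder f Xs K k b ⊆ relCylinder f Xs K' k b := by
  induction k generalizing b with
  | zero => exact Set.image_mono (Set.inter_subset_inter_left _ h)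
  | succ k ih => exact Set.image_mono (Set.inter_subset_inter_left _ (ih _))

theorem relCylinder_subset_of_image_subset {A : Set X} (h : ∀ j, f j '' (A ∩ Xs j) ⊆ A)
    (k : ℕ) (b : ℕ → Fin n) : relCylinder f Xs A k b ⊆ A := by
  induction k generalizing b with
  | zero => exact h _
  | succ k ih => exact (Set.image_mono (Set.inter_subset_inter_left _ (ih _))).trans (h _)

theorem exists_mem_relCylinder {A : Set X} (h : A ⊆ ⋃ j, f j '' (A ∩ Xs j))
    (k : ℕ) {x : X} (hx : x ∈ A) : ∃ b, x ∈ relCylinder f Xs A k b := by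
  induction k generalizing x with
  | zero =>
    obtain ⟨j, hj⟩ := Set.mem_iUnion.1 (h hx)
    exact ⟨fun _ => j, hj⟩
  | succ k ih =>
    obtain ⟨j, y, ⟨hyA, hyj⟩, rfl⟩ := Set.mem_iUnion.1 (h hx)
    obtain ⟨b, hb⟩ := ih hyA
    exact ⟨fun i => Nat.casesOn i j b, y, ⟨hb, hyj⟩, rfl⟩

theorem dist_le_of_mem_relCylinder [PseudoMetricSpace X] [CompactSpace X] {L : ℝ} (hL : 0 ≤ L)
    (hf : ∀ j, ∀ x ∈ Xs j, ∀ y ∈ Xs j, dist (f j x) (f j y) ≤ L * dist x y)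
    {K : Set X} (k : ℕ) (b : ℕ → Fin n) {x y : X}
    (hx : x ∈ relCylinder f Xs K k b) (hy : y ∈ relCylinder f Xs K k b) :
    dist x y ≤ L ^ (k + 1) * Metric.diam (Set.univ : Set X) := by
  induction k generalizing b x y with
  | zero =>
    obtain ⟨x, hx, rfl⟩ := hx
    obtain ⟨y, hy, rfl⟩ := hy
    rw [zero_add, pow_one]
    exact (hf _ x hx.2 y hy.2).trans (mul_le_mul_of_nonneg_left
      (Metric.dist_le_diam_of_mem isCompact_univ.isBounded (Set.mem_univ x) (Set.mem_univ y)) hL)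
  | succ k ih =>
    obtain ⟨x, hx, rfl⟩ := hx
    obtain ⟨y, hy, rfl⟩ := hy
    rw [pow_succ', mul_assoc]
    exact (hf _ x hx.2 y hy.2).trans (mul_le_mul_of_nonneg_left (ih _ hx.1 hy.1) hL)

theorem localHutchinson_sUnion_fixed {F : Set X → Set X}
    (hF : ∀ B, F B = ⋃ j, f j '' (B ∩ Xs j)) :
    F (⋃₀ {B | F B = B}) = ⋃₀ {B | F B = B} := by
  have mono : Monotone F := fun B C h => by
    rw [hF, hF]
    exact Set.iUnion_mono fun j => Set.image_mono (Set.inter_subset_inter_left _ h)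
  apply Set.Subset.antisymm
  · rw [hF]
    refine Set.iUnion_subset fun j => ?_
    rintro _ ⟨x, ⟨⟨B, hB, hxB⟩, hxj⟩, rfl⟩
    refine ⟨B, hB, ?_⟩
    rw [← show F B = B from hB, hF]
    exact Set.mem_iUnion.2 ⟨j, x, ⟨hxB, hxj⟩, rfl⟩
  · refine Set.sUnion_subset fun B hB => ?_
    rw [← show F B = B from hB]
    exact mono (Set.subset_sUnion_of_mem hB)

end RelCylinder

/-- For a contractive local IFS with nonempty local attractor `A`
and maximal contraction constant `L = max_j lam j < 1`: for every compact `A₀ ⊇ A`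
and every generation `k ≥ 1` (encoded by the index `k + 1`), the essential part of
`F^[k+1] A₀` is `L^(k+1) · diam X`-close to `A` in the Hausdorff distance. -/
theorem essentialPart_hausdorffDist_le {X : Type*} [MetricSpace X] [CompactSpace X]
    {n : ℕ} (hn : 0 < n)
    (Xs : Fin n → Set X) (hXs : ∀ j, IsClosed (Xs j))
    (f : Fin n → X → X)
    (lam : Fin n → ℝ) (hlam0 : ∀ j, 0 ≤ lam j) (hlam1 : ∀ j, lam j < 1)
    (hcontr : ∀ j, ∀ x ∈ Xs j, ∀ y ∈ Xs j, dist (f j x) (f j y) ≤ lam j * dist x y)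
    (L : ℝ) (hL : ∀ j, lam j ≤ L) (hL1 : L < 1)
    (hLmax : ∃ j, lam j = L)  -- `L` is the maximum of the `lam j`
    (F : Set X → Set X) (hF : ∀ B, F B = ⋃ j, f j '' (B ∩ Xs j))
    (A : Set X) (hA : A = ⋃₀ {B : Set X | F B = B}) (hAne : A.Nonempty)
    (A₀ : Set X) (hA₀ : IsCompact A₀) (hsub : A ⊆ A₀) (k : ℕ) :
    Metric.hausdorffDist (essentialPart f Xs A A₀ k) A
      ≤ L ^ (k + 1) * Metric.diam (Set.univ : Set X) := by
  have hL0 : 0 ≤ L := (hlam0 ⟨0, hn⟩).trans (hL _)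
  have hf : ∀ j, ∀ x ∈ Xs j, ∀ y ∈ Xs j, dist (f j x) (f j y) ≤ L * dist x y :=
    fun j x hx y hy => (hcontr j x hx y hy).trans (mul_le_mul_of_nonneg_right (hL j) dist_nonneg)
  have hfix : ⋃ j, f j '' (A ∩ Xs j) = A := by
    rw [← hF, hA]
    exact localHutchinson_sUnion_fixed hF
  have hbound : 0 ≤ L ^ (k + 1) * Metric.diam (Set.univ : Set X) :=
    mul_nonneg (pow_nonneg hL0 _) Metric.diam_nonneg
  refine Metric.hausdorffDist_le_of_mem_dist hbound (fun x hx => ?_) (fun x hx => ?_)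
  · obtain ⟨b, ⟨y, hy⟩, hxb⟩ := Set.mem_iUnion₂.1 hx
    exact ⟨y, relCylinder_subset_of_image_subset (Set.iUnion_subset_iff.1 hfix.subset) k b hy,
      dist_le_of_mem_relCylinder hL0 hf k b hxb (relCylinder_mono hsub k b hy)⟩
  · obtain ⟨b, hb⟩ := exists_mem_relCylinder hfix.superset k hx
    exact ⟨x, Set.mem_iUnion₂.2 ⟨b, ⟨x, hb⟩, relCylinder_mono hsub k b hb⟩,
      (dist_self x).trans_le hbound⟩
end

section
/- Let X be a set, m ≥ 1, E a finite type with maps i, t : E → Fin m, and for each e ∈ E let X_{t(e)}, X_{i(e)} ⊆ X and f_e : X → X satisfy f_e(X_{t(e)}) ⊆ X_{i(e)}. On Y := X × Fin m set D_e := X_{t(e)} × {t(e)} and g_e(x,v) := (f_e(x), i(e)). Suppose B ⊆ Y satisfies B = ⋃_{e ∈ E} g_e(B ∩ D_e) (e.g., B is the local attractor of the local IFS (D_e, g_e)_{e∈E}). Then, setting B_v := {x ∈ X : (x,v) ∈ B} for each v ∈ Fin m, the family (B_v) satisfies the graph-directed fixed-point equations: B_v = ⋃_{e ∈ E, i(e)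 = v} f_e(B_{t(e)}) for every v ∈ Fin m. -/
/-- Let `E` be a finite edge type with vertex maps `i, t : E → Fin m`,
subsets `Xv v ⊆ X` and maps `f e : X → X` with `f e (Xv (t e)) ⊆ Xv (i e)`. On the
enriched space `Y = X × Fin m`, set `D e = Xv (t e) × {t e}` and
`g e (x, v) = (f e x, i e)`. If `B ⊆ Y` satisfies `B = ⋃ e, g e '' (B ∩ D e)`
(e.g. `B` is the local attractor of the local IFS `(D e, g e)`), then the slices
`B_v = {x : (x, v) ∈ B}` satisfy the graph-directed fixed-point equations
`B_v = ⋃_{e : i e = v} f e '' B_{t e}`. -/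
theorem graphDirected_slices_fixed_point {X : Type*} {m : ℕ} (hm : 0 < m)
    (E : Type*) [Finite E]
    (i t : E → Fin m) (Xv : Fin m → Set X)
    (f : E → X → X) (hmaps : ∀ e, f e '' Xv (t e) ⊆ Xv (i e))
    (g : E → X × Fin m → X × Fin m) (hg : ∀ e p, g e p = (f e p.1, i e))
    (D : E → Set (X × Fin m)) (hD : ∀ e, D e = Xv (t e) ×ˢ ({t e} : Set (Fin m)))
    (B : Set (X × Fin m)) (hB : B = ⋃ e, g e '' (B ∩ D e)) :
    ∀ v : Fin m, {x : X | (x, v) ∈ B}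
      = ⋃ e ∈ {e : E | i e = v}, f e '' {x : X | (x, t e) ∈ B} := by
  have mem_iff : ∀ p, p ∈ B ↔ ∃ e, ∃ q ∈ B ∩ D e, g e q = p := fun p => by
    conv_lhs => rw [hB]
    simp only [Set.mem_iUnion, Set.mem_image]
  have fst_mem : ∀ x v, (x, v) ∈ B → x ∈ Xv v := by
    intro x v hx
    obtain ⟨e, q, ⟨-, hq⟩, heq⟩ := (mem_iff _).1 hx
    rw [hD] at hq
    rw [hg, Prod.mk.injEq] at heq
    obtain ⟨rfl, rfl⟩ := heq
    exact hmaps e (Set.mem_image_of_mem _ hq.1)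
  intro v
  ext x
  simp only [Set.mem_ofPred_eq, Set.mem_iUnion, Set.mem_image, exists_prop]
  constructor
  · intro hx
    obtain ⟨e, ⟨y, w⟩, ⟨hyB, hyD⟩, heq⟩ := (mem_iff _).1 hx
    rw [hD] at hyD
    obtain rfl : w = t e := hyD.2
    rw [hg, Prod.mk.injEq] at heq
    exact ⟨e, heq.2, y, hyB, heq.1⟩
  · rintro ⟨e, rfl, y, hy, rfl⟩
    refine (mem_iff _).2 ⟨e, (y, t e), ⟨hy, ?_⟩, hg _ _⟩
    rw [hD]
    exact ⟨fst_mem y (t e) hy, rfl⟩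
end
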